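/- arXiv:1710.00861 — 5 statements merged into one kernel-verified Lean document; each statement's English description precedes it below -/
import Mathlib

section
/- Let x ∈ ℝ^n and y ∈ ℝ^p be vectors, and let A ∈ ℝ^{n×k}, F ∈ ℝ^{k×l}, D ∈ ℝ^{l×p} be real matrices such that I − FᵀF is positive semidefinite. Then for every scalar ε > 0, 2·xᵀ A F D y ≤ ε⁻¹ · xᵀ A Aᵀ x + ε · yᵀ Dᵀ D y. -/
open Matrix

theorem stmt_0 (n p k l : ℕ)
    (x : Fin n → ℝ) (y : Fin p → ℝ)
    (A : Matrix (Fin n) (Fin k) ℝ) (F : Matrix (Fin k) (Fin l) ℝ)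
    (D : Matrix (Fin l) (Fin p) ℝ)
    (hF : ((1 : Matrix (Fin l) (Fin l) ℝ) - Fᵀ * F).PosSemidef) :
    ∀ ε : ℝ, 0 < ε →
      2 * (x ⬝ᵥ ((A * F * D) *ᵥ y)) ≤
        ε⁻¹ * (x ⬝ᵥ ((A * Aᵀ) *ᵥ x)) + ε * (y ⬝ᵥ ((Dᵀ * D) *ᵥ y)) := by
  intro ε hε
  have h1 : x ⬝ᵥ ((A * F * D) *ᵥ y) = (Aᵀ *ᵥ x) ⬝ᵥ (F *ᵥ (D *ᵥ y)) := by
    rw [Matrix.mul_assoc, ← Matrix.mulVec_mulVec, ← Matrix.mulVec_mulVec,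
      Matrix.dotProduct_mulVec, Matrix.mulVec_transpose]
  have h2 : x ⬝ᵥ ((A * Aᵀ) *ᵥ x) = (Aᵀ *ᵥ x) ⬝ᵥ (Aᵀ *ᵥ x) := by
    rw [← Matrix.mulVec_mulVec, Matrix.dotProduct_mulVec, Matrix.mulVec_transpose]
  have h3 : y ⬝ᵥ ((Dᵀ * D) *ᵥ y) = (D *ᵥ y) ⬝ᵥ (D *ᵥ y) := by
    rw [← Matrix.mulVec_mulVec, Matrix.dotProduct_mulVec, Matrix.vecMul_transpose]
  have h4 := hF.dotProduct_mulVec_nonneg (D *ᵥ y)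
  rw [h1, h2, h3]
  generalize D *ᵥ y = w at *
  generalize Aᵀ *ᵥ x = u at *
  have h5 : w ⬝ᵥ ((Fᵀ * F) *ᵥ w) = (F *ᵥ w) ⬝ᵥ (F *ᵥ w) := by
    rw [← Matrix.mulVec_mulVec, Matrix.dotProduct_mulVec, Matrix.vecMul_transpose]
  rw [star_trivial, Matrix.sub_mulVec, Matrix.one_mulVec, dotProduct_sub, h5] at h4
  have h6 : 2 * (u ⬝ᵥ (F *ᵥ w)) ≤ ε⁻¹ * (u ⬝ᵥ u) + ε * ((F *ᵥ w) ⬝ᵥ (F *ᵥ w)) := by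
    generalize F *ᵥ w = v
    simp only [dotProduct, Finset.mul_sum, ← Finset.sum_add_distrib]
    refine Finset.sum_le_sum fun i _ => ?_
    have h7 : 0 ≤ ε⁻¹ * (u i - ε * v i) ^ 2 := by positivity
    have h8 : ε⁻¹ * (u i - ε * v i) ^ 2
        = ε⁻¹ * (u i * u i) + ε * (v i * v i) - 2 * (u i * v i) := by
      field_simp
      ring
    linarith
  have h9 := mul_nonneg hε.le h4
  linarith
end

section
/- Let Ξ, Ξ₁, Ξ₂ be real symmetric n×n matrices and let γ₁ ≤ γ₂ be real numbers. Then the matrix Ξ + (γ − γ₁)·Ξ₁ + (γ₂ − γ)·Ξ₂ is negative definite for every γ with γ₁ ≤ γ ≤ γ₂ if and only if both Ξ + (γ₂ − γ₁)·Ξ₁ and Ξ + (γ₂ − γ₁)·Ξ₂ are negative definite. -/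
open Matrix

theorem stmt_1 (n : ℕ) (Ξ Ξ₁ Ξ₂ : Matrix (Fin n) (Fin n) ℝ)
    (hΞ : Ξ.IsHermitian) (hΞ₁ : Ξ₁.IsHermitian) (hΞ₂ : Ξ₂.IsHermitian)
    (γ₁ γ₂ : ℝ) (hγ : γ₁ ≤ γ₂) :
    (∀ γ : ℝ, γ₁ ≤ γ → γ ≤ γ₂ →
        (-(Ξ + (γ - γ₁) • Ξ₁ + (γ₂ - γ) • Ξ₂)).PosDef) ↔
      ((-(Ξ + (γ₂ - γ₁) • Ξ₁)).PosDef ∧ (-(Ξ + (γ₂ - γ₁) • Ξ₂)).PosDef) := by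
  constructor
  · intro h
    exact ⟨by simpa using h γ₂ hγ le_rfl, by simpa using h γ₁ le_rfl hγ⟩
  · rintro ⟨h1, h2⟩ γ ha hb
    rcases ha.eq_or_lt with rfl | ha
    · simpa using h2
    rcases hb.eq_or_lt with rfl | hb
    · simpa using h1
    have hd : 0 < γ₂ - γ₁ := by linarith
    have key := (h1.smul (div_pos (sub_pos.2 ha) hd)).add (h2.smul (div_pos (sub_pos.2 hb) hd))
    convert key using 1
    ext i j
    simp only [Matrix.neg_apply, Matrix.add_apply, Matrix.smul_apply, smul_eq_mul]
    field_simp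
    ring
end

section
/- Let R be a real symmetric positive definite n×n matrix, let M be a real k×n matrix, let u ∈ ℝ^k, let a ≤ b be real numbers, and let v : [a,b] → ℝ^n be a continuous function. Then −2·uᵀ M (∫ₐᵇ v(s) ds) − ∫ₐᵇ v(s)ᵀ R v(s) ds ≤ (b − a) · uᵀ M R⁻¹ Mᵀ u. -/
open Matrix intervalIntegral

theorem stmt_4_pointwise (n k : ℕ) (R : Matrix (Fin n) (Fin n) ℝ) (hR : R.PosDef)
    (M : Matrix (Fin k) (Fin n) ℝ) (u : Fin k → ℝ) (x : Fin n → ℝ) :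
    -2 * (u ⬝ᵥ (M *ᵥ x)) - x ⬝ᵥ (R *ᵥ x) ≤ u ⬝ᵥ ((M * R⁻¹ * Mᵀ) *ᵥ u) := by
  have hdet : IsUnit R.det := hR.det_pos.ne'.isUnit
  have hT : Rᵀ = R := by
    have := hR.isHermitian.eq
    rwa [conjTranspose_eq_transpose_of_trivial] at this
  have h := hR.posSemidef.dotProduct_mulVec_nonneg (x + R⁻¹ *ᵥ (Mᵀ *ᵥ u))
  have e1 : R *ᵥ (R⁻¹ *ᵥ (Mᵀ *ᵥ u)) = Mᵀ *ᵥ u := by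
    rw [mulVec_mulVec, mul_nonsing_inv _ hdet, one_mulVec]
  have e2 : x ⬝ᵥ (Mᵀ *ᵥ u) = u ⬝ᵥ (M *ᵥ x) := by
    rw [mulVec_transpose, dotProduct_mulVec, dotProduct_comm]
  have e3 : (R⁻¹ *ᵥ (Mᵀ *ᵥ u)) ⬝ᵥ (R *ᵥ x) = u ⬝ᵥ (M *ᵥ x) := by
    rw [dotProduct_mulVec, ← mulVec_transpose, hT, e1, dotProduct_comm, e2]
  have e4 : (R⁻¹ *ᵥ (Mᵀ *ᵥ u)) ⬝ᵥ (Mᵀ *ᵥ u) = u ⬝ᵥ ((M * R⁻¹ * Mᵀ) *ᵥ u) := by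
    rw [← mulVec_mulVec, ← mulVec_mulVec, dotProduct_mulVec u M, ← mulVec_transpose,
      dotProduct_comm]
  rw [star_trivial, mulVec_add, e1, add_dotProduct, dotProduct_add, dotProduct_add, e2, e3, e4] at h
  linarith

theorem stmt_4 (n k : ℕ) (R : Matrix (Fin n) (Fin n) ℝ) (hR : R.PosDef)
    (M : Matrix (Fin k) (Fin n) ℝ) (u : Fin k → ℝ)
    (a b : ℝ) (hab : a ≤ b) (v : ℝ → Fin n → ℝ)
    (hv : ContinuousOn v (Set.Icc a b)) :
    -2 * (u ⬝ᵥ (M *ᵥ ∫ s in a..b, v s)) - (∫ s in a..b, v s ⬝ᵥ (R *ᵥ v s)) ≤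
      (b - a) * (u ⬝ᵥ ((M * R⁻¹ * Mᵀ) *ᵥ u)) := by
  have hv' : ContinuousOn v (Set.uIcc a b) := by rwa [Set.uIcc_of_le hab]
  let L : (Fin n → ℝ) →L[ℝ] ℝ := LinearMap.toContinuousLinearMap
    { toFun := fun x => u ⬝ᵥ (M *ᵥ x)
      map_add' := fun x y => by rw [mulVec_add, dotProduct_add]
      map_smul' := fun c x => by rw [mulVec_smul, dotProduct_smul]; rfl }
  have hL : ∀ x, L x = u ⬝ᵥ (M *ᵥ x) := fun x => rfl
  have hq : Continuous fun x : Fin n → ℝ => x ⬝ᵥ (R *ᵥ x) := by fun_prop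
  have i1 : IntervalIntegrable (fun s => -2 * L (v s)) MeasureTheory.volume a b :=
    (continuousOn_const.mul (L.continuous.comp_continuousOn hv')).intervalIntegrable
  have i2 : IntervalIntegrable (fun s => v s ⬝ᵥ (R *ᵥ v s)) MeasureTheory.volume a b :=
    (hq.comp_continuousOn hv').intervalIntegrable
  rw [← hL, ← L.intervalIntegral_comp_comm hv'.intervalIntegrable,
    ← intervalIntegral.integral_const_mul, ← intervalIntegral.integral_sub i1 i2]
  have := intervalIntegral.integral_mono_on hab (i1.sub i2)
    (intervalIntegrable_const (c := u ⬝ᵥ ((M * R⁻¹ * Mᵀ) *ᵥ u)))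
    (fun s _ => stmt_4_pointwise n k R hR M u (v s))
  rwa [intervalIntegral.integral_const, smul_eq_mul] at this
end

section
/- Let ϱ > 0 and let V : [0,∞) → ℝ be a differentiable nonnegative function satisfying V′(t) ≤ −ϱ·√(V(t)) for all t ≥ 0. Then V(t) = 0 for every t ≥ t⋆, where t⋆ = 2·√(V(0))/ϱ. -/
theorem stmt_7 (ϱ : ℝ) (hϱ : 0 < ϱ) (V : ℝ → ℝ)
    (hdiff : ∀ t : ℝ, 0 ≤ t → DifferentiableAt ℝ V t)
    (hnonneg : ∀ t : ℝ, 0 ≤ t → 0 ≤ V t)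
    (hineq : ∀ t : ℝ, 0 ≤ t → deriv V t ≤ -ϱ * Real.sqrt (V t)) :
    ∀ t : ℝ, 2 * Real.sqrt (V 0) / ϱ ≤ t → V t = 0 := by
  intro t ht
  have ht0 : 0 ≤ t := le_trans (by positivity) ht
  by_contra hne
  have hpos : 0 < V t := lt_of_le_of_ne (hnonneg t ht0) (Ne.symm hne)
  have hanti : AntitoneOn V (Set.Icc 0 t) := by
    apply antitoneOn_of_deriv_nonpos (convex_Icc 0 t)
    · exact fun s hs => (hdiff s hs.1).continuousAt.continuousWithinAt
    · intro s hs
      exact (hdiff s (interior_subset hs).1).differentiableWithinAt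
    · intro s hs
      have h := hineq s (interior_subset hs).1
      nlinarith [Real.sqrt_nonneg (V s)]
  have hVpos : ∀ s ∈ Set.Icc 0 t, 0 < V s := fun s hs =>
    lt_of_lt_of_le hpos (hanti hs ⟨ht0, le_rfl⟩ hs.2)
  have hd : ∀ s ∈ Set.Icc 0 t, HasDerivAt (fun s => Real.sqrt (V s) + ϱ / 2 * s)
      (deriv V s / (2 * Real.sqrt (V s)) + ϱ / 2 * 1) s := fun s hs =>
    ((hdiff s hs.1).hasDerivAt.sqrt (hVpos s hs).ne').add
      ((hasDerivAt_id s).const_mul (ϱ / 2))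
  have hW : AntitoneOn (fun s => Real.sqrt (V s) + ϱ / 2 * s) (Set.Icc 0 t) := by
    apply antitoneOn_of_deriv_nonpos (convex_Icc 0 t)
    · exact fun s hs => (hd s hs).continuousAt.continuousWithinAt
    · intro s hs
      exact (hd s (interior_subset hs)).differentiableAt.differentiableWithinAt
    · intro s hs
      have hs' := interior_subset hs
      rw [(hd s hs').deriv]
      have hq := Real.sqrt_pos.2 (hVpos s hs')
      have h : deriv V s / (2 * Real.sqrt (V s)) ≤ -(ϱ / 2) := by
        rw [div_le_iff₀ (by positivity)]
        linarith [hineq s hs'.1]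
      linarith
  have h := hW (Set.left_mem_Icc.2 ht0) (Set.right_mem_Icc.2 ht0) ht0
  simp only [mul_zero, add_zero] at h
  rw [div_le_iff₀ hϱ] at ht
  have hq := Real.sqrt_pos.2 hpos
  linarith
end

section
/- Let ℓ be a finite index set and i ∈ ℓ. Let K ⊆ ℓ \ {i} be nonempty with α = |K| elements, and let U = ℓ \ ({i} ∪ K). Let λ : ℓ → ℝ satisfy λ(j) ≥ 0 for all j ≠ i and ∑_{j ∈ ℓ} λ(j) = 0. Let Q : ℓ → real symmetric n×n matrices, and let W and Q̄ be real symmetric n×n matrices. Assume: (a) Q(i) ⪰ W; (b) for every j ∈ K, λ(j)·(Q(j) − W) ≺ (1/α)·Q̄; and (c) for every j ∈ U, Q(j) ⪯ W. Then ∑_{j ∈ ℓ} λ(j)·Q(j) ⪯ Q̄. -/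
open Matrix

theorem stmt_11 (ι : Type*) [Fintype ι] [DecidableEq ι] (n : ℕ)
    (i : ι) (K : Finset ι) (hKne : K.Nonempty) (hiK : i ∉ K)
    (α : ℕ) (hα : α = K.card)
    (U : Finset ι) (hU : U = Finset.univ \ insert i K)
    (lam : ι → ℝ)
    (hlam : ∀ j : ι, j ≠ i → 0 ≤ lam j) (hsum : ∑ j, lam j = 0)
    (Q : ι → Matrix (Fin n) (Fin n) ℝ) (hQ : ∀ j, (Q j).IsHermitian)
    (W Qbar : Matrix (Fin n) (Fin n) ℝ)
    (hW : W.IsHermitian) (hQbar : Qbar.IsHermitian)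
    (ha : (Q i - W).PosSemidef)
    (hb : ∀ j ∈ K, ((1 / (α : ℝ)) • Qbar - lam j • (Q j - W)).PosDef)
    (hc : ∀ j ∈ U, (W - Q j).PosSemidef) :
    (Qbar - ∑ j, lam j • Q j).PosSemidef := by
  have hα0 : (α : ℝ) ≠ 0 := by
    rw [hα]; exact_mod_cast hKne.card_pos.ne'
  have hsplit : ∀ {M : Type} [AddCommGroup M] (f : ι → M),
      ∑ j, f j = f i + ∑ j ∈ K, f j + ∑ j ∈ U, f j := by
    intro M _ f
    rw [← Finset.sum_insert hiK, hU, add_comm,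
      Finset.sum_sdiff (Finset.subset_univ (insert i K))]
  have hUi : ∀ j ∈ U, j ≠ i := by
    intro j hj h
    subst h
    simp [hU] at hj
  have hKi : ∀ j ∈ K, j ≠ i := fun j hj h => hiK (h ▸ hj)
  have hli : 0 ≤ -lam i := by
    have h1 := hsplit lam
    have h2 : 0 ≤ ∑ j ∈ K, lam j := Finset.sum_nonneg fun j hj => hlam j (hKi j hj)
    have h3 : 0 ≤ ∑ j ∈ U, lam j := Finset.sum_nonneg fun j hj => hlam j (hUi j hj)
    linarith
  have hQW : ∑ j, lam j • Q j = ∑ j, lam j • (Q j - W) := by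
    simp only [smul_sub, Finset.sum_sub_distrib, ← Finset.sum_smul, hsum, zero_smul, sub_zero]
  have hKs : ∑ j ∈ K, ((1 / (α : ℝ)) • Qbar - lam j • (Q j - W))
      = Qbar - ∑ j ∈ K, lam j • (Q j - W) := by
    rw [Finset.sum_sub_distrib, Finset.sum_const, ← hα, ← Nat.cast_smul_eq_nsmul ℝ, smul_smul,
      mul_one_div_cancel hα0, one_smul]
  have hUs : ∑ j ∈ U, lam j • (W - Q j) = - ∑ j ∈ U, lam j • (Q j - W) := by
    rw [← Finset.sum_neg_distrib]
    exact Finset.sum_congr rfl fun j _ => by rw [← smul_neg, neg_sub]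
  have key : Qbar - ∑ j, lam j • Q j
      = (-lam i) • (Q i - W) + ∑ j ∈ K, ((1 / (α : ℝ)) • Qbar - lam j • (Q j - W))
        + ∑ j ∈ U, lam j • (W - Q j) := by
    rw [hQW, hsplit, hKs, hUs, neg_smul]
    abel
  rw [key]
  refine ((ha.smul hli).add ?_).add ?_
  · exact Matrix.posSemidef_sum K fun j hj => (hb j hj).posSemidef
  · exact Matrix.posSemidef_sum U fun j hj => (hc j hj).smul (hlam j (hUi j hj))
end
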